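/- Let p > 3 be a prime with p ≡ 3 (mod 4). Then the number of quadratic residues modulo p in the interval (0, p/2) is strictly greater than the number of quadratic non-residues modulo p in that interval; that is, #{x : 1 ≤ x < p/2 and (x/p) = 1} > #{x : 1 ≤ x < p/2 and (x/p) = −1}, where (x/p) is the Legendre symbol. -/

import Mathlib

open Finset Polynomial

lemma aux_prod_reflect {M : Type*} [CommMonoid M] (m : ℕ) (f : ℕ → M) :
    ∏ k ∈ range (2 * m), f (k + 1) = ∏ k ∈ range m, (f (k + 1) * f (2 * m + 1 - (k + 1))) := by
  rw [two_mul, prod_range_add, prod_mul_distrib]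
  congr 1
  rw [← prod_range_reflect]
  refine prod_congr rfl fun k hk => ?_
  rw [mem_range] at hk
  congr 1
  omega

lemma aux_sum_reflect {M : Type*} [AddCommMonoid M] (m : ℕ) (f : ℕ → M) :
    ∑ k ∈ range (2 * m), f (k + 1) = ∑ k ∈ range m, (f (k + 1) + f (2 * m + 1 - (k + 1))) :=
  aux_prod_reflect (M := Multiplicative M) m f

lemma aux_sum_even {M : Type*} [AddCommMonoid M] (m : ℕ) (f : ℕ → M) :
    ∑ k ∈ range (2 * m), f (k + 1) =
      ∑ k ∈ range m, (f (2 * (k + 1)) + f (2 * m + 1 - 2 * (k + 1))) := by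
  have h1 : ∑ k ∈ range (2 * m), f (k + 1) =
      ∑ k ∈ range m, f (2 * (k + 1)) + ∑ k ∈ range m, f (2 * k + 1) := by
    induction m with
    | zero => simp
    | succ n ih =>
      rw [show 2 * (n + 1) = 2 * n + 1 + 1 by ring, sum_range_succ, sum_range_succ, ih,
        sum_range_succ, sum_range_succ]
      rw [show 2 * (n + 1) = 2 * n + 1 + 1 by ring]
      abel
  rw [h1, sum_add_distrib]
  congr 1
  rw [← sum_range_reflect]
  refine sum_congr rfl fun k hk => ?_
  rw [mem_range] at hk
  congr 1
  omega

/-- Euler operator -/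
noncomputable def eulerOp {R : Type*} [CommRing R] (f : R[X]) : R[X] := X * derivative f

lemma eulerOp_iter_eval {R : Type*} [CommRing R] (n : ℕ) (g : R[X]) :
    eval 1 (eulerOp^[n] ((X - 1) ^ n * g)) = (n.factorial : R) * eval 1 g := by
  induction n generalizing g with
  | zero => simp
  | succ n ih =>
    have : eulerOp ((X - 1) ^ (n + 1) * g) =
        (X - 1) ^ n * (((n : R[X]) + 1) * X * g + (X - 1) * (X * derivative g)) := by
      simp only [eulerOp, derivative_mul, derivative_pow, derivative_sub, derivative_X,
        derivative_one]
      simp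
      ring
    rw [Function.iterate_succ_apply, this, ih]
    simp [Nat.factorial_succ]
    ring

lemma eulerOp_iter_sum {R : Type*} [CommRing R] (n : ℕ) (s : Finset ℕ) (c : ℕ → R) :
    eulerOp^[n] (∑ j ∈ s, C (c j) * X ^ j) = ∑ j ∈ s, C (c j * (j : R) ^ n) * X ^ j := by
  induction n generalizing c with
  | zero => simp
  | succ n ih =>
    have : eulerOp (∑ j ∈ s, C (c j) * X ^ j) = ∑ j ∈ s, C (c j * (j : R)) * X ^ j := by
      simp only [eulerOp, derivative_sum, mul_sum]
      refine sum_congr rfl fun j _ => ?_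
      rcases j with _ | j
      · simp
      · simp
        ring
    rw [Function.iterate_succ_apply, this, ih]
    refine sum_congr rfl fun j _ => ?_
    rw [pow_succ']
    ring_nf

lemma eulerOp_iter_add {R : Type*} [CommRing R] (n : ℕ) (f g : R[X]) :
    eulerOp^[n] (f + g) = eulerOp^[n] f + eulerOp^[n] g := by
  induction n generalizing f g with
  | zero => simp
  | succ n ih =>
    rw [Function.iterate_succ_apply, Function.iterate_succ_apply, Function.iterate_succ_apply, ← ih]
    congr 1
    simp [eulerOp, mul_add]

section Main

variable (p : ℕ) [Fact p.Prime]

lemma sign_alg (m : ℕ) (hm : p = 2 * m + 1) (hm0 : 0 < m) (ζ : ℂ) (hζ : IsPrimitiveRoot ζ p) (ε : ℤ)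
    (h : ∑ j ∈ range p, (legendreSym p j : ℂ) * ζ ^ j =
      ε * ∏ k ∈ range m, (ζ ^ (k + 1) - ζ ^ (p - (k + 1)))) :
    (-1 : ZMod p) = ε * (m.factorial * ∏ k ∈ range m, (2 * ((k + 1 : ℕ) : ZMod p))) := by
  have hp : p.Prime := Fact.out
  let A : ℤ[X] := ∑ j ∈ range p, C (legendreSym p j) * X ^ j
  let B : ℤ[X] := ∏ k ∈ range m, (X ^ (k + 1) - X ^ (p - (k + 1)))
  have h0 : aeval ζ (A - C ε * B) = 0 := by
    simp only [A, B, map_sub, map_mul, map_sum, map_prod, aeval_C, map_pow, aeval_X]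
    simp only [algebraMap_int_eq, eq_intCast]
    rw [h, sub_self]
  have hd : cyclotomic p ℤ ∣ A - C ε * B := by
    rw [cyclotomic_eq_minpoly hζ hp.pos]
    exact minpoly.isIntegrallyClosed_dvd (hζ.isIntegral hp.pos) h0
  obtain ⟨Q, hQ⟩ := hd
  have hQ' := congrArg (Polynomial.map (Int.castRingHom (ZMod p))) hQ
  have hc : cyclotomic p (ZMod p) = (X - 1) ^ (p - 1) := by
    have := cyclotomic_mul_prime_eq_pow_of_not_dvd (ZMod p) (p := p) (n := 1)
      (by simpa using hp.one_lt.ne')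
    simpa using this
  rw [Polynomial.map_mul, map_cyclotomic, hc] at hQ'
  have hB : B.map (Int.castRingHom (ZMod p)) = (X - 1) ^ m *
      ∏ k ∈ range m, (∑ i ∈ range (k + 1), X ^ i - ∑ i ∈ range (p - (k + 1)), X ^ i) := by
    simp only [B, Polynomial.map_prod, Polynomial.map_sub, Polynomial.map_pow, map_X]
    have : (X - 1 : (ZMod p)[X]) ^ m = ∏ k ∈ range m, (X - 1) := by simp
    rw [this, ← prod_mul_distrib]
    refine prod_congr rfl fun k _ => ?_
    rw [mul_sub, mul_geom_sum, mul_geom_sum]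
    ring
  have hA : A.map (Int.castRingHom (ZMod p)) =
      ∑ j ∈ range p, C ((j : ZMod p) ^ m) * X ^ j := by
    simp only [A, Polynomial.map_sum, Polynomial.map_mul, Polynomial.map_pow, map_X, map_C]
    refine sum_congr rfl fun j _ => ?_
    congr 2
    have := legendreSym.eq_pow p j
    rw [show p / 2 = m by omega] at this
    simpa using this
  have key : ∑ j ∈ range p, C ((j : ZMod p) ^ m) * X ^ j =
      (X - 1) ^ m * (C (ε : ZMod p) * ∏ k ∈ range m, (∑ i ∈ range (k + 1), X ^ i -
        ∑ i ∈ range (p - (k + 1)), X ^ i) + (X - 1) * ((X - 1) ^ (m - 1) *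
          Q.map (Int.castRingHom (ZMod p)))) := by
    rw [← hA]
    have : A = (A - C ε * B) + C ε * B := by ring
    rw [this, Polynomial.map_add, hQ', Polynomial.map_mul, hB]
    have e : p - 1 = m + (1 + (m - 1)) := by omega
    rw [e, pow_add, pow_add]
    simp
    ring
  have k2 := congrArg (fun f => eval 1 (eulerOp^[m] f)) key
  simp only [eulerOp_iter_sum, eulerOp_iter_eval] at k2
  have hL : eval 1 (∑ j ∈ range p, C ((j : ZMod p) ^ m * (j : ZMod p) ^ m) * X ^ j) = (-1 : ZMod p) := by
    simp only [eval_finsetSum, eval_mul, eval_C, eval_pow, eval_X, one_pow, mul_one]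
    rw [show range p = range (2 * m + 1) by rw [hm], sum_range_succ']
    have : ∀ k ∈ range (2 * m), ((k + 1 : ℕ) : ZMod p) ^ m * ((k + 1 : ℕ) : ZMod p) ^ m = 1 := by
      intro k hk
      rw [mem_range] at hk
      rw [← pow_add, show m + m = p - 1 by omega]
      apply ZMod.pow_card_sub_one_eq_one
      rw [Ne, ZMod.natCast_eq_zero_iff]
      intro hdiv
      have := Nat.le_of_dvd (by omega) hdiv
      omega
    rw [sum_congr rfl this]
    have h3 : ((2 * m + 1 : ℕ) : ZMod p) = 0 := by rw [← hm]; simp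
    simp [hm0.ne']
    push_cast at h3
    linear_combination h3
  rw [hL] at k2
  rw [k2]
  simp only [eval_add, eval_mul, eval_C, eval_prod, eval_sub, eval_finsetSum, eval_pow, eval_X,
    one_pow, sum_const, card_range, eval_one, sub_self, zero_mul, add_zero, nsmul_eq_mul, mul_one]
  have : ∀ k ∈ range m, (((k + 1 : ℕ) : ZMod p) - ((p - (k + 1) : ℕ) : ZMod p)) =
      2 * ((k + 1 : ℕ) : ZMod p) := by
    intro k hk
    rw [mem_range] at hk
    rw [Nat.cast_sub (by omega)]
    simp
    ring
  rw [prod_congr rfl this]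
  ring

lemma sign_val (m t : ℕ) (hm : p = 2 * m + 1) (ht : m = 2 * t + 1) (ε : ℤ) (hε : ε = 1 ∨ ε = -1)
    (h : (-1 : ZMod p) = ε * (m.factorial * ∏ k ∈ range m, (2 * ((k + 1 : ℕ) : ZMod p)))) :
    ε = (-1) ^ t := by
  have hp : p.Prime := Fact.out
  have hf : ∏ k ∈ range m, ((k + 1 : ℕ) : ZMod p) = m.factorial := by
    rw [← prod_range_add_one_eq_factorial]; push_cast; rfl
  have hsq : (m.factorial : ZMod p) ^ 2 = 1 := by
    have hw := ZMod.wilsons_lemma p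
    rw [show p - 1 = 2 * m by omega, ← prod_range_add_one_eq_factorial,
      aux_prod_reflect m (fun k => k)] at hw
    push_cast at hw
    have : ∀ k ∈ range m, ((k : ZMod p) + 1) * ((2 * m - k : ℕ) : ZMod p) =
        (-1) * (((k + 1 : ℕ) : ZMod p) * ((k + 1 : ℕ) : ZMod p)) := by
      intro k hk
      rw [mem_range] at hk
      rw [show 2 * m - k = p - (k + 1) by omega, Nat.cast_sub (by omega)]
      simp
      ring
    rw [prod_congr rfl this, prod_mul_distrib, prod_mul_distrib, hf] at hw
    simp [ht, pow_succ, pow_mul] at hw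
    rw [ht, sq]; exact hw
  have h2 : (2 : ZMod p) ^ m = legendreSym p 2 := by
    rw [legendreSym.eq_pow, show p / 2 = m by omega]; simp
  rw [prod_mul_distrib, hf, prod_const, card_range, h2] at h
  have h3 : (-1 : ZMod p) = ((ε * legendreSym p 2 : ℤ) : ZMod p) := by
    push_cast
    linear_combination h + ε * (legendreSym p 2 : ZMod p) * hsq
  rw [legendreSym.at_two (by omega), ZMod.χ₈_nat_mod_eight] at h3
  have hne : (-1 : ZMod p) ≠ 1 := by
    have : Fact (2 < p) := ⟨by have := hp.two_le; omega⟩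
    exact ZMod.neg_one_ne_one
  rcases Nat.even_or_odd' t with ⟨u, hu | hu⟩
  · have : p % 8 = 3 := by omega
    rw [this, show ZMod.χ₈ (3 : ℕ) = -1 by decide] at h3
    rcases hε with rfl | rfl
    · simp [hu, pow_mul]
    · exfalso; apply hne; simpa using h3
  · have : p % 8 = 7 := by omega
    rw [this, show ZMod.χ₈ (7 : ℕ) = 1 by decide] at h3
    rcases hε with rfl | rfl
    · exfalso; apply hne; simpa using h3
    · simp [hu, pow_mul, pow_succ]

lemma sum_zmod_range {M : Type*} [AddCommMonoid M] (f : ZMod p → M) :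
    ∑ a : ZMod p, f a = ∑ j ∈ range p, f (j : ZMod p) := by
  symm
  refine sum_bij (fun j _ => (j : ZMod p)) (fun _ _ => mem_univ _) ?_ ?_ (fun _ _ => rfl)
  · intro a ha b hb hab
    rw [mem_range] at ha hb
    have := (ZMod.natCast_eq_natCast_iff' a b p).1 hab
    rwa [Nat.mod_eq_of_lt ha, Nat.mod_eq_of_lt hb] at this
  · intro b _
    exact ⟨b.val, mem_range.2 (ZMod.val_lt b), by simp⟩

/-- the standard root of unity -/
noncomputable def zt (p : ℕ) : ℂ := Complex.exp (2 * Real.pi * Complex.I / p)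

lemma zt_prim : IsPrimitiveRoot (zt p) p :=
  Complex.isPrimitiveRoot_exp p (Fact.out : p.Prime).ne_zero

/-- the quadratic character with complex values -/
noncomputable def qc (p : ℕ) [Fact p.Prime] : MulChar (ZMod p) ℂ :=
  (quadraticChar (ZMod p)).ringHomComp (Int.castRingHom ℂ)

lemma qc_nat (j : ℕ) : qc p (j : ZMod p) = (legendreSym p j : ℂ) := by
  simp [qc, legendreSym]

lemma std_nat (j : ℕ) : (ZMod.stdAddChar (j : ZMod p) : ℂ) = zt p ^ j := by
  rw [ZMod.stdAddChar_apply, ZMod.toCircle_natCast, zt, ← Complex.exp_nat_mul]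
  congr 1
  ring

/-- the Gauss sum -/
noncomputable def gs (p : ℕ) [Fact p.Prime] : ℂ :=
  ∑ j ∈ range p, (legendreSym p j : ℂ) * zt p ^ j

lemma gs_eq : gs p = gaussSum (qc p) ZMod.stdAddChar := by
  rw [gs, gaussSum, sum_zmod_range]
  exact sum_congr rfl fun j _ => by rw [qc_nat, std_nat]

lemma qc_ne_one (hp2 : p ≠ 2) : qc p ≠ 1 := by
  rw [qc]
  exact (MulChar.ringHomComp_ne_one_iff (Int.cast_injective)).2
    (quadraticChar_ne_one (by rwa [ZMod.ringChar_zmod_n]))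

lemma qc_quad : (qc p).IsQuadratic :=
  (quadraticChar_isQuadratic _).comp _

lemma gs_sq (hp : p % 4 = 3) : gs p ^ 2 = -p := by
  rw [gs_eq, gaussSum_sq (qc_ne_one p (by omega)) (qc_quad p) (ZMod.isPrimitive_stdAddChar p),
    ZMod.card]
  have : qc p (-1) = -1 := by
    have h := legendreSym.at_neg_one (p := p) (by omega)
    rw [ZMod.χ₄_nat_three_mod_four hp] at h
    simp [legendreSym] at h
    simp [qc, h]
  rw [this]; ring

lemma gs_shift (hp2 : p ≠ 2) (n : ℕ) :
    ∑ j ∈ range p, (legendreSym p j : ℂ) * zt p ^ (j * n) = legendreSym p n * gs p := by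
  have h : ∑ j ∈ range p, (legendreSym p j : ℂ) * zt p ^ (j * n) =
      gaussSum (qc p) (ZMod.stdAddChar.mulShift (n : ZMod p)) := by
    rw [gaussSum, sum_zmod_range]
    refine sum_congr rfl fun j _ => ?_
    rw [qc_nat, AddChar.mulShift_apply, ← Nat.cast_mul, std_nat, mul_comm n j]
  rw [h, gs_eq, ← qc_nat]
  by_cases hn : (n : ZMod p) = 0
  · rw [hn]
    rw [AddChar.mulShift_zero, gaussSum_one_right (qc_ne_one p hp2), MulChar.map_zero, zero_mul]
  · have := gaussSum_mulShift_eq (qc p) ZMod.stdAddChar (Units.mk0 _ hn)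
    rw [(qc_quad p).inv] at this
    simpa using this

lemma zt_inv (k : ℕ) (hk : k ≤ p) : zt p ^ (p - k) = (zt p ^ k)⁻¹ := by
  rw [pow_sub₀ _ ((zt_prim p).ne_zero (Fact.out : p.Prime).ne_zero) hk, (zt_prim p).pow_eq_one,
    one_mul]

lemma B_sq (m t : ℕ) (hm : p = 2 * m + 1) (ht : m = 2 * t + 1) :
    (∏ k ∈ range m, (zt p ^ (k + 1) - zt p ^ (p - (k + 1)))) ^ 2 = -p := by
  have hp : p.Prime := Fact.out
  have h2 : IsPrimitiveRoot (zt p ^ 2) (2 * m + 1) := by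
    rw [← hm]
    refine (zt_prim p).pow_of_coprime 2 ?_
    rw [hm]; simp
  have h := h2.prod_one_sub_pow_eq_order
  rw [aux_prod_reflect m (fun k => 1 - (zt p ^ 2) ^ k)] at h
  have h3 : ∀ k ∈ range m, (1 - (zt p ^ 2) ^ (k + 1)) * (1 - (zt p ^ 2) ^ (2 * m + 1 - (k + 1))) =
     (-1) * (zt p ^ (k + 1) - zt p ^ (p - (k + 1))) ^ 2 := by
    intro k hk
    rw [mem_range] at hk
    rw [← hm, ← pow_mul, ← pow_mul, mul_comm 2, mul_comm 2, pow_mul, pow_mul,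
      zt_inv p _ (by omega)]
    have : zt p ^ (k + 1) ≠ 0 := pow_ne_zero _ ((zt_prim p).ne_zero hp.ne_zero)
    field_simp
    ring
  rw [prod_congr rfl h3, prod_mul_distrib, prod_const, card_range, prod_pow, ht, pow_succ,
    pow_mul] at h
  have hpc : (p : ℂ) = 2 * m + 1 := by rw [hm]; push_cast; ring
  rw [hpc, ht]
  push_cast at h ⊢
  linear_combination -h

lemma B_val (m t : ℕ) (hm : p = 2 * m + 1) (ht : m = 2 * t + 1) : ∃ r : ℝ, 0 ≤ r ∧
    ∏ k ∈ range m, (zt p ^ (k + 1) - zt p ^ (p - (k + 1))) = (-1) ^ t * (r * Complex.I) := by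
  have hp : p.Prime := Fact.out
  have hp0 : (0 : ℝ) < p := by exact_mod_cast hp.pos
  have h : ∀ k ∈ range m, zt p ^ (k + 1) - zt p ^ (p - (k + 1)) =
      ((2 * Real.sin (2 * Real.pi * (k + 1) / p) : ℝ) : ℂ) * Complex.I := by
    intro k hk
    rw [mem_range] at hk
    rw [zt_inv p _ (by omega), zt, ← Complex.exp_nat_mul, ← Complex.exp_neg]
    push_cast
    rw [Complex.two_sin]
    have e : ((k : ℂ) + 1) * (2 * Real.pi * Complex.I / p) =
      (2 * Real.pi * (k + 1) / p) * Complex.I := by ring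
    rw [e, ← neg_mul]
    linear_combination (Complex.exp (2 * Real.pi * (k + 1) / p * Complex.I)
      - Complex.exp (-(2 * Real.pi * (k + 1) / p) * Complex.I)) * Complex.I_sq
  refine ⟨∏ k ∈ range m, (2 * Real.sin (2 * Real.pi * (k + 1) / p)), ?_, ?_⟩
  · refine prod_nonneg fun k hk => ?_
    rw [mem_range] at hk
    have : 0 ≤ Real.sin (2 * Real.pi * (k + 1) / p) := by
      apply Real.sin_nonneg_of_nonneg_of_le_pi
      · positivity
      · rw [div_le_iff₀ hp0]
        have : (2 * ((k : ℝ) + 1)) ≤ p := by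
          have : 2 * (k + 1) ≤ p := by omega
          exact_mod_cast this
        nlinarith [Real.pi_pos]
    linarith
  · rw [prod_congr rfl h, prod_mul_distrib, prod_const, card_range]
    conv_lhs => rw [ht]
    rw [pow_succ, pow_mul, Complex.I_sq, ← ht]
    push_cast
    ring

lemma gs_im (hp : p % 4 = 3) : 0 ≤ (gs p).im := by
  obtain ⟨t, hpt⟩ : ∃ t, p = 4 * t + 3 := ⟨p / 4, by omega⟩
  have hm : p = 2 * (2 * t + 1) + 1 := by omega
  have hB := B_sq p _ t hm rfl
  obtain ⟨r, hr, hrB⟩ := B_val p _ t hm rfl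
  have hsq := gs_sq p hp
  rw [← hB, sq_eq_sq_iff_eq_or_eq_neg] at hsq
  obtain ⟨ε, hε, h⟩ : ∃ ε : ℤ, (ε = 1 ∨ ε = -1) ∧ gs p = ε *
      ∏ k ∈ range (2 * t + 1), (zt p ^ (k + 1) - zt p ^ (p - (k + 1))) := by
    rcases hsq with h | h
    · exact ⟨1, Or.inl rfl, by simpa using h⟩
    · exact ⟨-1, Or.inr rfl, by simpa using h⟩
  have := sign_val p _ t hm rfl ε hε (sign_alg p _ hm (by omega) _ (zt_prim p) ε h)
  rw [h, hrB, this]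
  push_cast
  rw [← mul_assoc, ← mul_pow]
  simpa using hr

open Filter Topology

lemma leg_add_p (i : ℕ) : legendreSym p ((p + i : ℕ) : ℤ) = legendreSym p (i : ℤ) := by
  simp [legendreSym]

lemma leg_abs (i : ℤ) : |(legendreSym p i : ℝ)| ≤ 1 := by
  by_cases h : (i : ZMod p) = 0
  · rw [(legendreSym.eq_zero_iff p i).2 h]; simp
  · rcases legendreSym.eq_one_or_neg_one p h with h | h <;> rw [h] <;> simp

lemma leg_sum (hp2 : p ≠ 2) : ∑ j ∈ range p, (legendreSym p j : ℤ) = 0 := by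
  have := quadraticChar_sum_zero (F := ZMod p) (by rwa [ZMod.ringChar_zmod_n])
  rw [sum_zmod_range] at this
  simpa [legendreSym] using this

lemma leg_bdd (hp2 : p ≠ 2) (n : ℕ) : |∑ i ∈ range n, (legendreSym p i : ℝ)| ≤ p := by
  induction n using Nat.strong_induction_on with
  | _ n ih =>
    by_cases h : n < p
    · refine (abs_sum_le_sum_abs _ _).trans ?_
      have h1 : ∑ i ∈ range n, |(legendreSym p (i : ℕ) : ℝ)| ≤ ∑ i ∈ range n, (1 : ℝ) :=
        sum_le_sum fun i _ => leg_abs p (i : ℤ)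
      have h2 : (n : ℝ) ≤ p := by exact_mod_cast h.le
      simp only [sum_const, card_range, nsmul_eq_mul, mul_one] at h1
      exact h1.trans h2
    · obtain ⟨k, rfl⟩ := Nat.exists_eq_add_of_le (not_lt.1 h)
      rw [sum_range_add]
      have h0 : ∑ j ∈ range p, (legendreSym p j : ℝ) = 0 := by exact_mod_cast leg_sum p hp2
      rw [h0, zero_add]
      simp only [leg_add_p]
      exact ih k (by have := (Fact.out : p.Prime).pos; omega)

lemma abel_bound (a b : ℕ → ℝ) (C : ℝ) (hC : ∀ n, |∑ i ∈ range n, a i| ≤ C) (K N : ℕ) (hKN : K ≤ N)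
    (hb0 : ∀ n, 0 ≤ b n) (hb : ∀ n, K ≤ n → b (n + 1) ≤ b n) :
    |∑ i ∈ Ico K N, a i * b i| ≤ 2 * C * b K := by
  have key : |∑ i ∈ Ico K N, a i * b i - (∑ i ∈ range N, a i) * b N| ≤ C * (2 * b K - b N) := by
    induction N, hKN using Nat.le_induction with
    | base =>
      simp only [Ico_self, sum_empty, zero_sub, abs_neg, abs_mul, abs_of_nonneg (hb0 K)]
      nlinarith [hC K, hb0 K]
    | succ n hn ih =>
      rw [sum_Ico_succ_top hn]
      have e : ∑ i ∈ Ico K n, a i * b i + a n * b n - (∑ i ∈ range (n + 1), a i) * b (n + 1) =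
        (∑ i ∈ Ico K n, a i * b i - (∑ i ∈ range n, a i) * b n) +
        (∑ i ∈ range (n + 1), a i) * (b n - b (n + 1)) := by
        rw [sum_range_succ]; ring
      rw [e]
      refine (abs_add_le _ _).trans ?_
      have h1 : |(∑ i ∈ range (n + 1), a i) * (b n - b (n + 1))| ≤ C * (b n - b (n + 1)) := by
        rw [abs_mul, abs_of_nonneg (sub_nonneg.2 (hb n hn))]
        exact mul_le_mul_of_nonneg_right (hC _) (sub_nonneg.2 (hb n hn))
      linarith
  have h2 : |(∑ i ∈ range N, a i) * b N| ≤ C * b N := by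
    rw [abs_mul, abs_of_nonneg (hb0 N)]
    exact mul_le_mul_of_nonneg_right (hC _) (hb0 N)
  rw [abs_le] at *
  constructor <;> nlinarith

open scoped ComplexOrder in
lemma conv_nonneg (N : ℕ) :
    0 ≤ ∑ d ∈ Ico 1 (N + 1), (legendreSym p d : ℝ) * ((N / d : ℕ) : ℝ) := by
  have h2 : (qc p) ^ 2 = 1 := (qc_quad p).sq_eq_one
  have h0 : ∀ n, 0 ≤ DirichletCharacter.zetaMul (N := p) (qc p) n :=
    fun n => DirichletCharacter.zetaMul_nonneg (N := p) h2 n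
  have h1 : 0 ≤ ∑ n ∈ Ioc 0 N, DirichletCharacter.zetaMul (N := p) (qc p) n :=
    sum_nonneg fun n _ => h0 n
  rw [DirichletCharacter.zetaMul, mul_comm, ArithmeticFunction.sum_Ioc_mul_zeta_eq_sum] at h1
  have e : ∑ n ∈ Ioc 0 N, (toArithmeticFunction (fun n => qc p (n : ZMod p))) n * ((N / n : ℕ) : ℂ) =
      ((∑ d ∈ Ico 1 (N + 1), (legendreSym p d : ℝ) * ((N / d : ℕ) : ℝ) : ℝ) : ℂ) := by
    push_cast
    rw [show Ioc 0 N = Ico 1 (N + 1) by ext; simp; omega]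
    refine sum_congr rfl fun d hd => ?_
    rw [mem_Ico] at hd
    have : d ≠ 0 := by omega
    simp [toArithmeticFunction, this, qc_nat]
  rw [e] at h1
  exact_mod_cast h1

lemma B_lower (hp2 : p ≠ 2) (K : ℕ) (hK : 1 ≤ K) :
    -((1 + 2 * p) / K : ℝ) ≤ ∑ d ∈ range K, (legendreSym p d : ℝ) / d := by
  have hK0 : (0 : ℝ) < K := by exact_mod_cast hK
  have hKN : K ≤ K ^ 2 + 1 := by nlinarith
  have h0 := conv_nonneg p (K ^ 2)
  rw [← sum_Ico_consecutive _ hK hKN] at h0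
  have h1 := abel_bound (fun d => (legendreSym p d : ℝ)) (fun d => ((K ^ 2 / d : ℕ) : ℝ)) p
    (leg_bdd p hp2) K (K ^ 2 + 1) hKN (fun n => by positivity) (fun n hn => by
      have : K ^ 2 / (n + 1) ≤ K ^ 2 / n := Nat.div_le_div_left (by omega) (by omega)
      exact_mod_cast this)
  have h2 : K ^ 2 / K = K := by rw [sq]; exact Nat.mul_div_cancel _ hK
  simp only [h2] at h1
  have h1' := (abs_le.1 h1).2
  have h3 : ∑ d ∈ Ico 1 K, (legendreSym p d : ℝ) * ((K ^ 2 / d : ℕ) : ℝ) ≤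
      ∑ d ∈ Ico 1 K, ((K : ℝ) ^ 2 * ((legendreSym p d : ℝ) / d) + 1) := by
    refine sum_le_sum fun d hd => ?_
    rw [mem_Ico] at hd
    have hd0 : (0 : ℝ) < d := by exact_mod_cast hd.1
    have a1 : ((K ^ 2 / d : ℕ) : ℝ) ≤ (K : ℝ) ^ 2 / d := by
      have := @Nat.cast_div_le ℝ _ _ _ (K ^ 2) d
      exact_mod_cast this
    have a2 : (K : ℝ) ^ 2 / d - 1 ≤ ((K ^ 2 / d : ℕ) : ℝ) := by
      have := Nat.lt_div_mul_add (a := K ^ 2) (b := d) hd.1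
      have : (K : ℝ) ^ 2 < ((K ^ 2 / d : ℕ) : ℝ) * d + d := by exact_mod_cast this
      rw [sub_le_iff_le_add, div_le_iff₀ hd0]
      linarith
    have a3 := abs_le.1 (leg_abs p d)
    rw [show (K : ℝ) ^ 2 * ((legendreSym p d : ℝ) / d) =
      (legendreSym p d : ℝ) * ((K : ℝ) ^ 2 / d) by ring]
    nlinarith
  rw [sum_add_distrib, ← mul_sum] at h3
  have h4 : ∑ d ∈ range K, (legendreSym p d : ℝ) / d =
      ∑ d ∈ Ico 1 K, (legendreSym p d : ℝ) / d := by
    rw [range_eq_Ico, ← sum_Ico_consecutive _ (zero_le_one) hK]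
    simp
  rw [← h4] at h3
  have h5 : ∑ d ∈ Ico 1 K, (1 : ℝ) ≤ K := by
    simp
  rw [neg_le_iff_add_nonneg', div_add' _ _ _ hK0.ne']
  apply div_nonneg _ hK0.le
  have : 0 ≤ (K : ℝ) * (1 + 2 * p + (∑ d ∈ range K, (legendreSym p d : ℝ) / d) * K) := by
    nlinarith
  exact nonneg_of_mul_nonneg_right this hK0

lemma exists_l (hp2 : p ≠ 2) : ∃ l : ℝ, 0 ≤ l ∧
    Tendsto (fun n => ∑ d ∈ range n, (legendreSym p d : ℝ) / d) atTop (𝓝 l) := by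
  have hc : CauchySeq fun n ↦ ∑ i ∈ range n, (1 / ((i : ℝ) + 1)) •
      (legendreSym p ((i + 1 : ℕ) : ℤ) : ℝ) := by
    refine Antitone.cauchySeq_series_mul_of_tendsto_zero_of_bounded (b := (p : ℝ)) ?_
      tendsto_one_div_add_atTop_nhds_zero_nat ?_
    · intro a b hab
      have : (a : ℝ) ≤ b := by exact_mod_cast hab
      exact one_div_le_one_div_of_le (by positivity) (by linarith)
    · intro n
      have := leg_bdd p hp2 (n + 1)
      rw [sum_range_succ'] at this
      simpa using this
  obtain ⟨l, hl⟩ := cauchySeq_tendsto_of_complete hc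
  have hl' : Tendsto (fun n => ∑ d ∈ range n, (legendreSym p d : ℝ) / d) atTop (𝓝 l) := by
    rw [← tendsto_add_atTop_iff_nat 1]
    refine hl.congr fun n => ?_
    rw [sum_range_succ']
    simp
    refine sum_congr rfl fun i _ => ?_
    ring
  refine ⟨l, ?_, hl'⟩
  have hz : Tendsto (fun K : ℕ => -((1 + 2 * p) / K : ℝ)) atTop (𝓝 0) := by
    simpa using (tendsto_const_div_atTop_nhds_zero_nat (1 + 2 * (p : ℝ))).neg
  refine le_of_tendsto_of_tendsto hz hl' ?_
  filter_upwards [eventually_ge_atTop 1] with K hK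
  exact B_lower p hp2 K hK

lemma zt_norm : ‖zt p‖ = 1 :=
  (zt_prim p).norm'_eq_one (Fact.out : p.Prime).ne_zero

lemma zt_pow (j : ℕ) : zt p ^ j = Complex.exp (((2 * Real.pi * j / p : ℝ) : ℂ) * Complex.I) := by
  rw [zt, ← Complex.exp_nat_mul]
  push_cast
  congr 1
  ring

lemma arg_val (j : ℕ) (hj : 0 < j) (hjp : j < p) :
    (1 - zt p ^ j).arg = Real.pi * j / p - Real.pi / 2 := by
  have hp0 : (0 : ℝ) < p := by exact_mod_cast (Fact.out : p.Prime).pos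
  have hj0 : (0 : ℝ) < j := by exact_mod_cast hj
  have hjp' : (j : ℝ) < p := by exact_mod_cast hjp
  have hpi := Real.pi_pos
  set φ : ℝ := Real.pi * j / p with hφ
  have hφ0 : 0 < φ := by positivity
  have hφ1 : φ < Real.pi := by
    rw [hφ, div_lt_iff₀ hp0]; nlinarith
  have hs : 0 < Real.sin φ := Real.sin_pos_of_pos_of_lt_pi hφ0 hφ1
  have e : 1 - zt p ^ j = ((2 * Real.sin φ : ℝ) : ℂ) *
      (Complex.cos ((φ - Real.pi / 2 : ℝ) : ℂ) + Complex.sin ((φ - Real.pi / 2 : ℝ) : ℂ) * Complex.I) := by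
    rw [zt_pow, show (2 * Real.pi * j / p : ℝ) = 2 * φ by rw [hφ]; ring, Complex.exp_mul_I,
      ← Complex.ofReal_cos, ← Complex.ofReal_sin, ← Complex.ofReal_cos, ← Complex.ofReal_sin,
      Real.cos_sub_pi_div_two, Real.sin_sub_pi_div_two, Real.cos_two_mul, Real.sin_two_mul]
    have := Real.sin_sq_add_cos_sq φ
    apply Complex.ext
    · simp [-Complex.ofReal_sin, -Complex.ofReal_cos]
      norm_cast
      nlinarith
    · simp [-Complex.ofReal_sin, -Complex.ofReal_cos]
      norm_cast
  rw [e, Complex.arg_mul_cos_add_sin_mul_I (by positivity)]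
  constructor <;> linarith

lemma series_eq (hp2 : p ≠ 2) (x : ℝ) (hx0 : 0 ≤ x) (hx : x < 1) :
    gs p * ((∑' n : ℕ, (legendreSym p n : ℝ) / n * x ^ n : ℝ) : ℂ) =
      ∑ j ∈ range p, (legendreSym p j : ℂ) * (-Complex.log (1 - x * zt p ^ j)) := by
  have h1 : ∀ j ∈ range p, HasSum (fun n : ℕ => (legendreSym p j : ℂ) * ((x * zt p ^ j) ^ n / n))
      ((legendreSym p j : ℂ) * (-Complex.log (1 - x * zt p ^ j))) := by
    intro j _
    refine (Complex.hasSum_taylorSeries_neg_log ?_).mul_left _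
    rw [norm_mul, norm_pow, zt_norm]
    simpa [abs_of_nonneg hx0] using hx
  have h2 := (hasSum_sum h1).tsum_eq
  rw [← h2, Complex.ofReal_tsum, ← tsum_mul_left]
  refine tsum_congr fun n => ?_
  have h3 := gs_shift p hp2 n
  push_cast
  calc gs p * ((legendreSym p n : ℂ) / n * (x : ℂ) ^ n)
      = (legendreSym p n * gs p) * ((x : ℂ) ^ n / n) := by ring
    _ = _ := by
      rw [← h3, sum_mul]
      refine sum_congr rfl fun j _ => ?_
      rw [mul_pow, ← pow_mul]
      ring

lemma T_nonpos (hp : p % 4 = 3) : ∑ j ∈ range p, legendreSym p j * (j : ℤ) ≤ 0 := by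
  have hp2 : p ≠ 2 := by omega
  have hp0 : (0 : ℝ) < p := by exact_mod_cast (Fact.out : p.Prime).pos
  obtain ⟨l, hl0, hl⟩ := exists_l p hp2
  have h1 := Real.tendsto_tsum_powerSeries_nhdsWithin_lt hl
  have h2 : Tendsto (fun x : ℝ => gs p * ((∑' n : ℕ, (legendreSym p n : ℝ) / n * x ^ n : ℝ) : ℂ))
      (𝓝[<] 1) (𝓝 (gs p * l)) :=
    ((Complex.continuous_ofReal.tendsto l).comp h1).const_mul _
  have h3 : Tendsto (fun x : ℝ => ∑ j ∈ range p,
      (legendreSym p j : ℂ) * (-Complex.log (1 - x * zt p ^ j))) (𝓝[<] 1)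
      (𝓝 (∑ j ∈ range p, (legendreSym p j : ℂ) * (-Complex.log (1 - zt p ^ j)))) := by
    refine tendsto_finsetSum _ fun j hj => ?_
    rw [mem_range] at hj
    rcases Nat.eq_zero_or_pos j with rfl | hj0
    · simp
    · refine Tendsto.const_mul _ (Tendsto.neg ?_)
      have hs : 1 - zt p ^ j ∈ Complex.slitPlane := by
        left
        have hne : zt p ^ j ≠ 1 := (zt_prim p).pow_ne_one_of_pos_of_lt hj0.ne' hj
        have hn : ‖zt p ^ j‖ = 1 := by rw [norm_pow, zt_norm, one_pow]
        have hle : (zt p ^ j).re ≤ 1 := hn ▸ Complex.re_le_norm _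
        rcases hle.lt_or_eq with h | h
        · simpa using h
        · exfalso
          apply hne
          have hsq := Complex.sq_norm (zt p ^ j)
          rw [hn, Complex.normSq_apply, h] at hsq
          apply Complex.ext
          · simpa using h
          · have : (zt p ^ j).im * (zt p ^ j).im = 0 := by linarith
            simpa using this
      have hcont : Tendsto (fun x : ℝ => 1 - (x : ℂ) * zt p ^ j) (𝓝[<] 1) (𝓝 (1 - zt p ^ j)) := by
        have : Continuous (fun x : ℝ => 1 - (x : ℂ) * zt p ^ j) := by fun_prop
        have := (this.tendsto 1).mono_left (nhdsWithin_le_nhds (s := Set.Iio 1))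
        simpa using this
      exact hcont.clog hs
  have h4 : gs p * l = ∑ j ∈ range p, (legendreSym p j : ℂ) * (-Complex.log (1 - zt p ^ j)) := by
    refine tendsto_nhds_unique (h2.congr' ?_) h3
    have : Set.Ioo (0 : ℝ) 1 ∈ 𝓝[<] (1 : ℝ) := Ioo_mem_nhdsLT zero_lt_one
    filter_upwards [this] with x hx
    exact series_eq p hp2 x hx.1.le hx.2
  have h5 := congrArg Complex.im h4
  have h6 : ∀ j ∈ range p, ((legendreSym p j : ℂ) * (-Complex.log (1 - zt p ^ j))).im =
      -(Real.pi / p) * ((legendreSym p j : ℝ) * j) + Real.pi / 2 * (legendreSym p j : ℝ) := by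
    intro j hj
    rw [mem_range] at hj
    rcases Nat.eq_zero_or_pos j with rfl | hj0
    · simp
    · rw [← Complex.ofReal_intCast, Complex.im_ofReal_mul, Complex.neg_im, Complex.log_im,
        arg_val p j hj0 hj]
      ring
  rw [Complex.im_sum, sum_congr rfl h6, sum_add_distrib, ← mul_sum, ← mul_sum,
    Complex.im_mul_ofReal] at h5
  have h0 : ∑ j ∈ range p, (legendreSym p j : ℝ) = 0 := by exact_mod_cast leg_sum p hp2
  rw [h0, mul_zero, add_zero] at h5
  have h7 : 0 ≤ (gs p).im * l := mul_nonneg (gs_im p hp) hl0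
  have h8 : ∑ j ∈ range p, (legendreSym p j : ℝ) * j ≤ 0 := by
    by_contra hcon
    push Not at hcon
    have : 0 < (Real.pi / p) * ∑ j ∈ range p, (legendreSym p j : ℝ) * j := by
      have := Real.pi_pos
      positivity
    linarith
  exact_mod_cast h8

lemma leg_neg (hp : p % 4 = 3) (j : ℕ) (hj : j ≤ p) :
    legendreSym p ((p - j : ℕ) : ℤ) = - legendreSym p j := by
  have h := legendreSym.at_neg_one (p := p) (by omega)
  rw [ZMod.χ₄_nat_three_mod_four hp] at h
  have e : legendreSym p ((p - j : ℕ) : ℤ) = legendreSym p (-1 * j) := by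
    simp [legendreSym, Nat.cast_sub hj]
  rw [e, legendreSym.mul, h]
  ring

lemma S_nonneg (hp : p % 4 = 3) (m : ℕ) (hm : p = 2 * m + 1) :
    0 ≤ ∑ k ∈ range m, legendreSym p ((k + 1 : ℕ) : ℤ) := by
  have hT := T_nonpos p hp
  have e0 : ∑ j ∈ range p, legendreSym p j * (j : ℤ) =
      ∑ k ∈ range (2 * m), legendreSym p ((k + 1 : ℕ) : ℤ) * ((k + 1 : ℕ) : ℤ) := by
    rw [show range p = range (2 * m + 1) by rw [hm], sum_range_succ']
    simp
  rw [e0] at hT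
  have e1 := aux_sum_reflect m (fun k => legendreSym p k * (k : ℤ))
  have e2 := aux_sum_even m (fun k => legendreSym p k * (k : ℤ))
  set T := ∑ k ∈ range (2 * m), legendreSym p ((k + 1 : ℕ) : ℤ) * ((k + 1 : ℕ) : ℤ)
  set S := ∑ k ∈ range m, legendreSym p ((k + 1 : ℕ) : ℤ) with hS
  set U := ∑ k ∈ range m, legendreSym p ((k + 1 : ℕ) : ℤ) * ((k + 1 : ℕ) : ℤ) with hU
  have e1' : T = 2 * U - p * S := by
    rw [e1, hU, hS, mul_sum, mul_sum, ← sum_sub_distrib]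
    refine sum_congr rfl fun k hk => ?_
    rw [mem_range] at hk
    rw [← hm, leg_neg p hp _ (by omega), Nat.cast_sub (by omega)]
    ring
  have e2' : T = legendreSym p 2 * (4 * U - p * S) := by
    rw [e2, hU, hS, mul_sum, mul_sum, ← sum_sub_distrib, mul_sum]
    refine sum_congr rfl fun k hk => ?_
    rw [mem_range] at hk
    rw [← hm, leg_neg p hp _ (by omega), Nat.cast_sub (by omega), Nat.cast_mul 2, legendreSym.mul]
    push_cast
    ring
  have h2 : ((2 : ℤ) : ZMod p) ≠ 0 := by
    have : ((2 : ℕ) : ZMod p) ≠ 0 := by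
      rw [Ne, ZMod.natCast_eq_zero_iff]
      intro h
      have := Nat.le_of_dvd (by omega) h
      omega
    simpa using this
  have hp0 : (0 : ℤ) < p := by exact_mod_cast (Fact.out : p.Prime).pos
  by_contra hcon
  push Not at hcon
  have : (p : ℤ) * S < 0 := mul_neg_of_pos_of_neg hp0 hcon
  rcases legendreSym.eq_one_or_neg_one p h2 with h | h <;> rw [h] at e2' <;> linarith

lemma card_filter_eq (m : ℕ) (hm : p = 2 * m + 1) (c : ℤ) :
    ((Finset.Ico (1 : ℤ) (p : ℤ)).filter
        (fun x => 2 * x < (p : ℤ) ∧ legendreSym p x = c)).card =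
    ((range m).filter (fun k => legendreSym p ((k + 1 : ℕ) : ℤ) = c)).card := by
  symm
  refine card_bij (fun k _ => ((k + 1 : ℕ) : ℤ)) ?_ ?_ ?_
  · intro k hk
    rw [mem_filter, mem_range] at hk
    rw [mem_filter, mem_Ico]
    refine ⟨⟨by omega, by omega⟩, by omega, hk.2⟩
  · intro a _ b _ h
    omega
  · intro x hx
    rw [mem_filter, mem_Ico] at hx
    obtain ⟨n, rfl⟩ := Int.eq_ofNat_of_zero_le (show 0 ≤ x by omega)
    refine ⟨n - 1, ?_, ?_⟩
    · rw [mem_filter, mem_range, show n - 1 + 1 = n by omega]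
      exact ⟨by omega, hx.2.2⟩
    · omega

end Main

theorem residues_outnumber_nonresidues (p : ℕ) [Fact p.Prime]
    (hp3 : 3 < p) (hpmod : p % 4 = 3) :
    ((Finset.Ico (1 : ℤ) (p : ℤ)).filter
        (fun x => 2 * x < (p : ℤ) ∧ legendreSym p x = 1)).card >
      ((Finset.Ico (1 : ℤ) (p : ℤ)).filter
        (fun x => 2 * x < (p : ℤ) ∧ legendreSym p x = -1)).card := by
  obtain ⟨m, hm⟩ : ∃ m, p = 2 * m + 1 := ⟨p / 2, by omega⟩
  rw [card_filter_eq p m hm, card_filter_eq p m hm]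
  have hS := S_nonneg p hpmod m hm
  have hv : ∀ k ∈ range m, legendreSym p ((k + 1 : ℕ) : ℤ) = 1 ∨
      legendreSym p ((k + 1 : ℕ) : ℤ) = -1 := by
    intro k hk
    rw [mem_range] at hk
    apply legendreSym.eq_one_or_neg_one
    rw [Int.cast_natCast, Ne, ZMod.natCast_eq_zero_iff]
    intro h
    have := Nat.le_of_dvd (by omega) h
    omega
  have h1 : ∑ k ∈ range m, legendreSym p ((k + 1 : ℕ) : ℤ) =
      (((range m).filter (fun k => legendreSym p ((k + 1 : ℕ) : ℤ) = 1)).card : ℤ) -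
      ((range m).filter (fun k => legendreSym p ((k + 1 : ℕ) : ℤ) = -1)).card := by
    rw [card_filter, card_filter]
    push_cast
    rw [← sum_sub_distrib]
    refine sum_congr rfl fun k hk => ?_
    have := hv k hk
    push_cast at this
    rcases this with h | h <;> rw [h] <;> simp
  have h2 : m = ((range m).filter (fun k => legendreSym p ((k + 1 : ℕ) : ℤ) = 1)).card +
      ((range m).filter (fun k => legendreSym p ((k + 1 : ℕ) : ℤ) = -1)).card := by
    rw [card_filter, card_filter, ← sum_add_distrib]
    conv_lhs => rw [← card_range m, card_eq_sum_ones]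
    refine sum_congr rfl fun k hk => ?_
    rcases hv k hk with h | h <;> rw [h] <;> simp
  rw [h1] at hS
  omega
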